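/- Let x ∈ ℝ^m and λ ∈ ℝ^m be fixed vectors, and define the half-space R = {y ∈ ℝ^m : λᵀ(y - x) ≤ 0}. Then for every σ > 0, ∫_R λᵀ(y - x) (∂g(y|x,σ)/∂σ) dy = σ^{-1} ∫_R λᵀ(y - x) g(y|x,σ) dy. (Appendix preliminary lemma) -/

import Mathlib

open MeasureTheory Real Matrix

/-- The density of the multivariate normal distribution with mean `x` and covariance `σ² A`. -/
noncomputable def gaussDensity (m : ℕ) (A : Matrix (Fin m) (Fin m) ℝ)
    (x y : Fin m → ℝ) (σ : ℝ) : ℝ :=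
  (2 * π * σ ^ 2) ^ (-(m : ℝ) / 2) * A.det ^ (-(1 : ℝ) / 2) *
    Real.exp (-((y - x) ⬝ᵥ (A⁻¹).mulVec (y - x)) / (2 * σ ^ 2))

/-!
Write `q z = zᵀA⁻¹z` and `t = 1 / (2σ²)`. Then `∂g/∂σ = (q (y - x) / σ³ - m / σ) g`, so the claim
is about the moment `∫ f q e^{-tq}` for a positively homogeneous `f` of degree `p` (here `λᵀz` cut
off to the half-space, with `p = 1`). Since `q` is homogeneous of degree `2`, dilating the variable
shows that `∫ f e^{-tq}` is a constant multiple of `t ^ (-(p + m) / 2)`; differentiating in `t`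
gives `∫ f q e^{-tq} = (p + m) / (2t) * ∫ f e^{-tq} = (p + m) σ² * ∫ f e^{-tq}`, and the two terms
proportional to `m` cancel.
-/

open Module

/-- Positive homogeneity of degree `p`: only dilations by `r > 0` are constrained, so that the
indicator of a cone is homogeneous of degree `0` and real degrees make sense. -/
def IsPosHomogeneous {E : Type*} [SMul ℝ E] (p : ℝ) (f : E → ℝ) : Prop :=
  ∀ ⦃r : ℝ⦄, 0 < r → ∀ z, f (r • z) = r ^ p * f z

namespace IsPosHomogeneous

variable {E : Type*} {p : ℝ} {f : E → ℝ}

lemma const_mul [SMul ℝ E] (hf : IsPosHomogeneous p f) (c : ℝ) :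
    IsPosHomogeneous p (fun z => c * f z) := fun r hr z => by
  simp only [hf hr, mul_left_comm]

lemma apply_smul_nonpos [SMul ℝ E] (hf : IsPosHomogeneous p f) {r : ℝ} (hr : 0 < r) {z : E}
    (hz : f z ≤ 0) : f (r • z) ≤ 0 := by
  rw [hf hr]
  exact mul_nonpos_of_nonneg_of_nonpos (rpow_pos_of_pos hr p).le hz

lemma indicator [MulAction ℝ E] {S : Set E} (hf : IsPosHomogeneous p f)
    (hS : ∀ ⦃r : ℝ⦄, 0 < r → ∀ z ∈ S, r • z ∈ S) : IsPosHomogeneous p (S.indicator f) := by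
  intro r hr z
  have smul_mem_iff : r • z ∈ S ↔ z ∈ S :=
    ⟨fun h => by simpa only [inv_smul_smul₀ hr.ne'] using hS (inv_pos.2 hr) _ h, hS hr z⟩
  by_cases hz : z ∈ S
  · rw [Set.indicator_of_mem (smul_mem_iff.2 hz), Set.indicator_of_mem hz, hf hr]
  · rw [Set.indicator_of_notMem (mt smul_mem_iff.1 hz), Set.indicator_of_notMem hz, mul_zero]

end IsPosHomogeneous

lemma isPosHomogeneous_dotProduct {n : Type*} [Fintype n] (v : n → ℝ) :
    IsPosHomogeneous 1 (fun z => v ⬝ᵥ z) := fun r _ z => by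
  simp only [dotProduct_smul, rpow_one, smul_eq_mul]

lemma isPosHomogeneous_dotProduct_mulVec {n : Type*} [Fintype n] (B : Matrix n n ℝ) :
    IsPosHomogeneous 2 (fun z => z ⬝ᵥ B *ᵥ z) := fun r _ z => by
  simp only [mulVec_smul, dotProduct_smul, smul_dotProduct, smul_eq_mul, rpow_two, sq, mul_assoc]

lemma mul_exp_neg_mul_le {c : ℝ} (hc : 0 < c) (y : ℝ) : y * exp (-(c * y)) ≤ exp (-1) / c := by
  rw [le_div_iff₀ hc]
  calc y * exp (-(c * y)) * c = c * y * exp (-(c * y)) := by ring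
    _ ≤ exp (-1) := mul_exp_neg_le_exp_neg_one _

lemma integrable_and_hasDerivAt_integral_mul_exp_neg {α : Type*} [MeasurableSpace α]
    {μ : Measure α} {g q : α → ℝ} {t : ℝ} (hg : Integrable g μ) (hq : AEStronglyMeasurable q μ)
    (hq0 : ∀ z, 0 ≤ q z) (ht : 0 < t) :
    Integrable (fun z => q z * (g z * exp (-(t * q z)))) μ ∧
      HasDerivAt (fun s => ∫ z, g z * exp (-(s * q z)) ∂μ)
        (-∫ z, q z * (g z * exp (-(t * q z))) ∂μ) t := by
  have meas (s : ℝ) : AEStronglyMeasurable (fun z => g z * exp (-(s * q z))) μ :=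
    hg.aestronglyMeasurable.mul
      (continuous_exp.comp_aestronglyMeasurable (hq.const_mul s).neg)
  have exp_le_one (z : α) : exp (-(t * q z)) ≤ 1 :=
    exp_le_one_iff.2 (neg_nonpos.2 (mul_nonneg ht.le (hq0 z)))
  have deriv_bound (z : α) {s : ℝ} (hs : t / 2 ≤ s) :
      ‖-(q z * (g z * exp (-(s * q z))))‖ ≤ exp (-1) / (t / 2) * ‖g z‖ := by
    have := hq0 z
    calc ‖-(q z * (g z * exp (-(s * q z))))‖ = q z * exp (-(s * q z)) * ‖g z‖ := by
          rw [norm_neg, norm_mul, norm_mul, norm_of_nonneg (hq0 z),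
            norm_of_nonneg (exp_pos _).le, mul_assoc, mul_comm ‖g z‖]
      _ ≤ q z * exp (-(t / 2 * q z)) * ‖g z‖ := by gcongr
      _ ≤ exp (-1) / (t / 2) * ‖g z‖ := by
          gcongr ?_ * ‖g z‖
          exact mul_exp_neg_mul_le (half_pos ht) _
  have deriv_integrand (z : α) (s : ℝ) :
      HasDerivAt (fun s => g z * exp (-(s * q z))) (-(q z * (g z * exp (-(s * q z))))) s := by
    refine ((((hasDerivAt_id s).mul_const (q z)).neg.exp).const_mul (g z)).congr_deriv ?_
    simp only [Pi.neg_apply, id_eq]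
    ring
  have integrable_at : Integrable (fun z => g z * exp (-(t * q z))) μ :=
    hg.mono (meas t) <| .of_forall fun z => by
      rw [norm_mul, norm_of_nonneg (exp_pos _).le]
      exact mul_le_of_le_one_right (norm_nonneg _) (exp_le_one z)
  have differentiated := hasDerivAt_integral_of_dominated_loc_of_deriv_le
    (Ioi_mem_nhds (half_lt_self ht))
    (.of_forall meas) integrable_at (hq.mul (meas t)).neg
    (.of_forall fun z _ hs => deriv_bound z (le_of_lt hs)) (hg.norm.const_mul _)
    (.of_forall fun z s _ => deriv_integrand z s)
  exact ⟨by simpa only [Pi.neg_def, neg_neg] using differentiated.1.neg,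
    by simpa only [integral_neg] using differentiated.2⟩

lemma IsPosHomogeneous.mul_exp_neg_comp_smul {E : Type*} [SMul ℝ E] {f q : E → ℝ} {p a s t : ℝ}
    (hf : IsPosHomogeneous p f) (hq : IsPosHomogeneous a q) (ha : a ≠ 0)
    (hs : 0 < s) (ht : 0 < t) (z : E) :
    f ((s / t) ^ a⁻¹ • z) * exp (-(t * q ((s / t) ^ a⁻¹ • z))) =
      (s / t) ^ (a⁻¹ * p) * (f z * exp (-(s * q z))) := by
  have hst : 0 < s / t := div_pos hs ht
  rw [hf (rpow_pos_of_pos hst _), hq (rpow_pos_of_pos hst _), rpow_inv_rpow hst.le ha,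
    ← rpow_mul hst.le, ← mul_assoc t, mul_div_cancel₀ s ht.ne', mul_assoc]

section Scaling

variable {E : Type*} [NormedAddCommGroup E] [NormedSpace ℝ E] [FiniteDimensional ℝ E]
  [MeasurableSpace E] [BorelSpace E] {μ : Measure E} [μ.IsAddHaarMeasure]
  {f q : E → ℝ} {p a s t : ℝ}

lemma IsPosHomogeneous.integrable_mul_exp_neg (hf : IsPosHomogeneous p f)
    (hq : IsPosHomogeneous a q) (ha : a ≠ 0) (hs : 0 < s) (ht : 0 < t)
    (hint : Integrable (fun z => f z * exp (-(t * q z))) μ) :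
    Integrable (fun z => f z * exp (-(s * q z))) μ := by
  have hst : 0 < s / t := div_pos hs ht
  have dilated := hint.comp_smul (rpow_pos_of_pos hst a⁻¹).ne'
  simp only [hf.mul_exp_neg_comp_smul hq ha hs ht] at dilated
  exact (integrable_const_mul_iff (rpow_pos_of_pos hst _).ne'.isUnit _).1 dilated

lemma IsPosHomogeneous.integral_mul_exp_neg_eq_rpow_mul (hf : IsPosHomogeneous p f)
    (hq : IsPosHomogeneous a q) (ha : a ≠ 0) (hs : 0 < s) (ht : 0 < t) :
    ∫ z, f z * exp (-(s * q z)) ∂μ =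
      (s / t) ^ (-((p + finrank ℝ E) / a)) * ∫ z, f z * exp (-(t * q z)) ∂μ := by
  have hst : 0 < s / t := div_pos hs ht
  have change_of_variables := μ.integral_comp_smul_of_nonneg
    (fun z => f z * exp (-(t * q z))) ((s / t) ^ a⁻¹) (hR := (rpow_pos_of_pos hst _).le)
  simp only [hf.mul_exp_neg_comp_smul hq ha hs ht, integral_const_mul, smul_eq_mul,
    ← rpow_mul_natCast hst.le, ← rpow_neg hst.le] at change_of_variables
  rw [← mul_right_inj' (rpow_pos_of_pos hst (a⁻¹ * p)).ne', change_of_variables, ← mul_assoc,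
    ← rpow_add hst]
  congr 2
  ring

lemma IsPosHomogeneous.integrable_and_integral_mul_mul_exp_neg (hf : IsPosHomogeneous p f)
    (hq : IsPosHomogeneous a q) (hq_meas : AEStronglyMeasurable q μ) (hq0 : ∀ z, 0 ≤ q z)
    (ha : a ≠ 0) (ht : 0 < t) (hint : Integrable (fun z => f z * exp (-(t * q z))) μ) :
    Integrable (fun z => q z * (f z * exp (-(t * q z)))) μ ∧
      ∫ z, q z * (f z * exp (-(t * q z))) ∂μ =
        (p + finrank ℝ E) / (a * t) * ∫ z, f z * exp (-(t * q z)) ∂μ := by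
  set I := ∫ z, f z * exp (-(t * q z)) ∂μ
  have split_exp (s : ℝ) (z : E) :
      f z * exp (-(t / 2 * q z)) * exp (-(s * q z)) = f z * exp (-((t / 2 + s) * q z)) := by
    rw [mul_assoc, ← exp_add]
    ring_nf
  have differentiated := integrable_and_hasDerivAt_integral_mul_exp_neg
    (hf.integrable_mul_exp_neg hq ha (half_pos ht) ht hint)
    hq_meas hq0 (half_pos ht)
  simp only [split_exp, add_halves] at differentiated
  have scaled : (fun s => ∫ z, f z * exp (-((t / 2 + s) * q z)) ∂μ) =ᶠ[nhds (t / 2)]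
      fun s => ((t / 2 + s) / t) ^ (-((p + finrank ℝ E) / a)) * I := by
    filter_upwards [Ioi_mem_nhds (half_pos ht)] with s hs
    exact hf.integral_mul_exp_neg_eq_rpow_mul hq ha (add_pos (half_pos ht) hs) ht
  have ratio_eq_one : (t / 2 + t / 2) / t = 1 := by rw [add_halves, div_self ht.ne']
  have deriv_scaled :
      HasDerivAt (fun s => ((t / 2 + s) / t) ^ (-((p + finrank ℝ E) / a)) * I)
        (-((p + finrank ℝ E) / (a * t)) * I) (t / 2) := by
    refine (((((hasDerivAt_id _).const_add (t / 2)).div_const t).rpow_const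
      (.inl (by rw [id_eq, ratio_eq_one]; exact one_ne_zero))).mul_const I).congr_deriv ?_
    simp only [id_eq, ratio_eq_one, one_rpow, mul_one]
    field_simp
  refine ⟨differentiated.1, neg_injective ?_⟩
  rw [← neg_mul]
  exact differentiated.2.unique (deriv_scaled.congr_of_eventuallyEq scaled)

end Scaling

section Integrability

variable {n : Type*} [Fintype n]

open scoped MatrixOrder in
lemma exists_pos_forall_mul_dotProduct_self_le {B : Matrix n n ℝ} (hB : B.PosDef) :
    ∃ c > 0, ∀ z, c * (z ⬝ᵥ z) ≤ z ⬝ᵥ B *ᵥ z := by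
  classical
  rcases isEmpty_or_nonempty n with _ | _
  · exact ⟨1, one_pos, fun z => by simp [dotProduct]⟩
  obtain ⟨c, hc, hcB⟩ := (CFC.exists_pos_algebraMap_le_iff (a := B) hB.isHermitian).2
    fun _ hx => hB.isStrictlyPositive.spectrum_pos hx
  refine ⟨c, hc, fun z => ?_⟩
  simpa [Algebra.algebraMap_eq_smul_one, sub_mulVec, smul_mulVec] using
    (Matrix.le_iff.1 hcB).dotProduct_mulVec_nonneg z

lemma integrable_exp_dotProduct_sub_mul_dotProduct_self {c : ℝ} (hc : 0 < c) (v : n → ℝ) :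
    Integrable (fun z : n → ℝ => exp (v ⬝ᵥ z - c * (z ⬝ᵥ z))) := by
  have := (GaussianFourier.integrable_cexp_neg_mul_sum_add (b := c) (by simpa using hc)
    (fun i => (v i : ℂ))).norm
  refine this.congr (.of_forall fun z => ?_)
  simp only [Complex.norm_exp, dotProduct]
  norm_cast
  congr 1
  simp only [sq]
  ring

lemma integrable_dotProduct_mul_exp_neg {B : Matrix n n ℝ} (hB : B.PosDef) (v : n → ℝ) :
    Integrable (fun z : n → ℝ => v ⬝ᵥ z * exp (-(z ⬝ᵥ B *ᵥ z))) := by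
  obtain ⟨c, hc, hcB⟩ := exists_pos_forall_mul_dotProduct_self_le hB
  refine ((integrable_exp_dotProduct_sub_mul_dotProduct_self hc v).add
    (integrable_exp_dotProduct_sub_mul_dotProduct_self hc (-v))).mono'
    (by fun_prop) (.of_forall fun z => ?_)
  have abs_le : |v ⬝ᵥ z| ≤ exp (v ⬝ᵥ z) + exp (-(v ⬝ᵥ z)) :=
    abs_le'.2 ⟨by linarith [add_one_le_exp (v ⬝ᵥ z), exp_pos (-(v ⬝ᵥ z))],
      by linarith [add_one_le_exp (-(v ⬝ᵥ z)), exp_pos (v ⬝ᵥ z)]⟩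
  calc ‖v ⬝ᵥ z * exp (-(z ⬝ᵥ B *ᵥ z))‖ = |v ⬝ᵥ z| * exp (-(z ⬝ᵥ B *ᵥ z)) := by
        rw [norm_mul, norm_eq_abs, norm_of_nonneg (exp_pos _).le]
    _ ≤ (exp (v ⬝ᵥ z) + exp (-(v ⬝ᵥ z))) * exp (-(c * (z ⬝ᵥ z))) := by
        gcongr
        exact hcB z
    _ = exp (v ⬝ᵥ z - c * (z ⬝ᵥ z)) + exp (-v ⬝ᵥ z - c * (z ⬝ᵥ z)) := by
        rw [add_mul, ← exp_add, ← exp_add, neg_dotProduct, sub_eq_add_neg, sub_eq_add_neg]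

end Integrability

section GaussDensity

variable {m : ℕ} {A : Matrix (Fin m) (Fin m) ℝ} {σ : ℝ}

lemma gaussDensity_eq_mul_exp (x y : Fin m → ℝ) :
    gaussDensity m A x y σ = gaussDensity m A 0 0 σ *
      exp (-(1 / (2 * σ ^ 2) * ((y - x) ⬝ᵥ A⁻¹ *ᵥ (y - x)))) := by
  simp only [gaussDensity, sub_zero, zero_dotProduct, neg_zero, zero_div, exp_zero, mul_one]
  ring_nf

lemma hasDerivAt_gaussDensity (hσ : σ ≠ 0) (x y : Fin m → ℝ) :
    HasDerivAt (fun s => gaussDensity m A x y s)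
      (((y - x) ⬝ᵥ A⁻¹ *ᵥ (y - x) / σ ^ 3 - m / σ) * gaussDensity m A x y σ) σ := by
  have base_ne : 2 * π * σ ^ 2 ≠ 0 := by positivity
  have deriv_base := (hasDerivAt_pow 2 σ).const_mul (2 * π)
  have deriv_factor := (deriv_base.rpow_const (p := -(m : ℝ) / 2) (.inl base_ne)).mul_const
    (A.det ^ (-(1 : ℝ) / 2))
  have deriv_exponent := (hasDerivAt_const σ (-((y - x) ⬝ᵥ A⁻¹ *ᵥ (y - x)))).div
    ((hasDerivAt_pow 2 σ).const_mul 2) (by positivity)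
  refine (deriv_factor.mul deriv_exponent.exp).congr_deriv ?_
  rw [gaussDensity, rpow_sub_one base_ne]
  simp only [Pi.div_apply]
  field_simp
  ring

lemma integrable_dotProduct_mul_gaussDensity (hA : A.PosDef) (hσ : σ ≠ 0) (v x : Fin m → ℝ) :
    Integrable (fun y => v ⬝ᵥ (y - x) * gaussDensity m A x y σ) := by
  have precision_posDef : ((1 / (2 * σ ^ 2)) • A⁻¹).PosDef := hA.inv.smul (by positivity)
  have centered := (integrable_dotProduct_mul_exp_neg precision_posDef v).const_mul
    (gaussDensity m A 0 0 σ)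
  refine (centered.comp_sub_right x).congr (.of_forall fun y => ?_)
  simp only [smul_mulVec, dotProduct_smul, smul_eq_mul]
  rw [gaussDensity_eq_mul_exp x y, mul_left_comm]

lemma integral_mul_deriv_gaussDensity (hA : A.PosDef) (hσ : σ ≠ 0) {p : ℝ}
    {f : (Fin m → ℝ) → ℝ} (hf : IsPosHomogeneous p f) (x : Fin m → ℝ)
    (hint : Integrable (fun y => f (y - x) * gaussDensity m A x y σ)) :
    ∫ y, f (y - x) * deriv (fun s => gaussDensity m A x y s) σ =
      p * σ⁻¹ * ∫ y, f (y - x) * gaussDensity m A x y σ := by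
  set q : (Fin m → ℝ) → ℝ := fun z => z ⬝ᵥ A⁻¹ *ᵥ z
  set F : (Fin m → ℝ) → ℝ := fun z => gaussDensity m A 0 0 σ * f z * exp (-(1 / (2 * σ ^ 2) * q z))
  have density (y : Fin m → ℝ) : f (y - x) * gaussDensity m A x y σ = F (y - x) := by
    rw [gaussDensity_eq_mul_exp]
    ring
  have deriv_density (y : Fin m → ℝ) : f (y - x) * deriv (fun s => gaussDensity m A x y s) σ =
      (σ ^ 3)⁻¹ * (q (y - x) * F (y - x)) - m / σ * F (y - x) := by
    rw [(hasDerivAt_gaussDensity hσ x y).deriv, mul_left_comm, density]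
    ring
  have hF_int : Integrable F := by
    simp only [density] at hint
    simpa only [add_sub_cancel_right] using hint.comp_add_right x
  obtain ⟨hqF_int, (moment : ∫ z, q z * F z = _ * ∫ z, F z)⟩ :=
    (hf.const_mul (gaussDensity m A 0 0 σ)).integrable_and_integral_mul_mul_exp_neg
      (isPosHomogeneous_dotProduct_mulVec A⁻¹) (by fun_prop)
      (fun z => by simpa using hA.inv.posSemidef.dotProduct_mulVec_nonneg z)
      two_ne_zero (by positivity) hF_int
  simp only [density, deriv_density]
  rw [integral_sub_right_eq_self (fun z => (σ ^ 3)⁻¹ * (q z * F z) - m / σ * F z),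
    integral_sub_right_eq_self F, integral_sub (hqF_int.const_mul _) (hF_int.const_mul _),
    integral_const_mul, integral_const_mul, moment, finrank_fin_fun]
  field_simp
  ring

theorem halfspace_lemma_general (hA : A.PosDef) (hσ : σ ≠ 0) {S : Set (Fin m → ℝ)}
    (hS : ∀ ⦃r : ℝ⦄, 0 < r → ∀ z ∈ S, r • z ∈ S) (hS_meas : MeasurableSet S) {p : ℝ}
    {f : (Fin m → ℝ) → ℝ} (hf : IsPosHomogeneous p f) (x : Fin m → ℝ)
    (hint : IntegrableOn (fun y => f (y - x) * gaussDensity m A x y σ) {y | y - x ∈ S}) :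
    ∫ y in {y | y - x ∈ S}, f (y - x) * deriv (fun s => gaussDensity m A x y s) σ =
      p * σ⁻¹ * ∫ y in {y | y - x ∈ S}, f (y - x) * gaussDensity m A x y σ := by
  have hR : MeasurableSet {y | y - x ∈ S} := hS_meas.preimage (measurable_sub_const x)
  have indicator_mul (g : (Fin m → ℝ) → ℝ) :
      {y | y - x ∈ S}.indicator (fun y => f (y - x) * g y) =
        fun y => S.indicator f (y - x) * g y :=
    funext fun y => Set.indicator_mul_left _ (fun y => f (y - x)) g
  rw [← integrable_indicator_iff hR, indicator_mul] at hint
  rw [← integral_indicator hR, ← integral_indicator hR, indicator_mul, indicator_mul]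
  exact integral_mul_deriv_gaussDensity hA hσ (hf.indicator hS) x hint

end GaussDensity

/-- Appendix preliminary lemma: for fixed `x, λ ∈ ℝᵐ` and the half-space
`R = {y : λᵀ(y-x) ≤ 0}`, one has
`∫_R λᵀ(y-x) (∂g(y|x,σ)/∂σ) dy = σ⁻¹ ∫_R λᵀ(y-x) g(y|x,σ) dy` for every `σ > 0`. -/
theorem halfspace_lemma (m : ℕ) (A : Matrix (Fin m) (Fin m) ℝ) (hA : A.PosDef)
    (x lam : Fin m → ℝ) (σ : ℝ) (hσ : 0 < σ) :
    ∫ y in {y : Fin m → ℝ | lam ⬝ᵥ (y - x) ≤ 0},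
        (lam ⬝ᵥ (y - x)) * deriv (fun s => gaussDensity m A x y s) σ
      = σ⁻¹ * ∫ y in {y : Fin m → ℝ | lam ⬝ᵥ (y - x) ≤ 0},
          (lam ⬝ᵥ (y - x)) * gaussDensity m A x y σ := by
  simpa only [one_mul, Set.mem_ofPred_eq] using
    halfspace_lemma_general hA hσ.ne' (S := {z | lam ⬝ᵥ z ≤ 0})
      (fun _ hr _ hz => (isPosHomogeneous_dotProduct lam).apply_smul_nonpos hr hz)
      (measurableSet_le (by fun_prop) measurable_const) (isPosHomogeneous_dotProduct lam) x
      (integrable_dotProduct_mul_gaussDensity hA hσ.ne' lam x).integrableOn
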